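/- arXiv:2312.07610 — 2 statements merged into one kernel-verified Lean document; each statement's English description precedes it below -/
import Mathlib

section
/- Identification of modified-treatment-policy (MTP) means under model M2 (sequential exchangeability B1.3): for any MTP g whose induced kernels q̃^g satisfy positivity B1.2, under consistency and condition B1.3 one has E[Y^g] = Ψ_{q̃^g}(P). -/
open Classical

noncomputable section

/-- Probability of the event `S` under the probability mass function `P`
on a finite sample space. -/
def pr {Ω : Type} [Fintype Ω] (P : Ω → ℝ) (S : Ω → Prop) : ℝ :=
  ∑ ω, if S ω then P ω else 0

/-- Conditional probability of `S` given `T`, with the convention that it is `0`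
when the conditioning event is null (in Lean, `x / 0 = 0`). -/
def cpr {Ω : Type} [Fintype Ω] (P : Ω → ℝ) (S T : Ω → Prop) : ℝ :=
  pr P (fun ω => S ω ∧ T ω) / pr P T

/-- Expectation of `X` under `P`. -/
def expec {Ω : Type} [Fintype Ω] (P : Ω → ℝ) (X : Ω → ℝ) : ℝ :=
  ∑ ω, X ω * P ω

/-- Conditional expectation of `X` given the event `T`, with the convention that
it is `0` when the conditioning event is null. -/
def cexp {Ω : Type} [Fintype Ω] (P : Ω → ℝ) (X : Ω → ℝ) (T : Ω → Prop) : ℝ :=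
  (∑ ω, if T ω then X ω * P ω else 0) / pr P T

/-- Observed history event `{L̄_t = l̄_t, Ā_{t-1} = ā_{t-1}}` (covariates through
time `t`, treatments strictly before `t`). -/
def histEvent {Ω Lt : Type} {K : ℕ} (L : Fin K → Ω → Lt) (A : Fin K → Ω → Fin 2)
    (t : Fin K) (lbar : Fin K → Lt) (abar : Fin K → Fin 2) : Ω → Prop :=
  fun ω => (∀ s, s ≤ t → L s ω = lbar s) ∧ (∀ s, s < t → A s ω = abar s)

/-- The g-formula `Ψ_q̃(P)` for an intervention-kernel collection `q`:
`Σ_{y,l̄_K,ā_K} y · p(y|l̄_K,ā_K) · ∏_j p(l_j|l̄_{j-1},ā_{j-1}) · ∏_t q̃_t(a_t|l̄_t,ā_{t-1})`. -/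
def gform {Ω Lt : Type} [Fintype Ω] [Fintype Lt] {K : ℕ}
    (P : Ω → ℝ) (L : Fin K → Ω → Lt) (A : Fin K → Ω → Fin 2) (Y : Ω → ℝ)
    (q : Fin K → (Fin K → Lt) → (Fin K → Fin 2) → Fin 2 → ℝ) : ℝ :=
  ∑ lbar : Fin K → Lt, ∑ abar : Fin K → Fin 2,
    cexp P Y (fun ω => (∀ s, L s ω = lbar s) ∧ (∀ s, A s ω = abar s))
      * (∏ j, cpr P (fun ω => L j ω = lbar j)
          (fun ω => (∀ s, s < j → L s ω = lbar s) ∧ (∀ s, s < j → A s ω = abar s)))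
      * (∏ t, q t lbar abar (abar t))

/-- `q` is a collection of intervention kernels: each `q t lbar abar` is a
probability mass function on `{0,1}`. -/
def IsKernel {Lt : Type} {K : ℕ}
    (q : Fin K → (Fin K → Lt) → (Fin K → Fin 2) → Fin 2 → ℝ) : Prop :=
  ∀ (t : Fin K) (lbar : Fin K → Lt) (abar : Fin K → Fin 2),
    (∀ a, 0 ≤ q t lbar abar a) ∧ (∑ a, q t lbar abar a) = 1

/-- The kernel at time `t` depends only on the history values `(l̄_t, ā_{t-1})`. -/
def KernelPrefixDep {Lt : Type} {K : ℕ}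
    (q : Fin K → (Fin K → Lt) → (Fin K → Fin 2) → Fin 2 → ℝ) : Prop :=
  ∀ (t : Fin K) (lbar lbar' : Fin K → Lt) (abar abar' : Fin K → Fin 2),
    (∀ s, s ≤ t → lbar s = lbar' s) → (∀ s, s < t → abar s = abar' s) →
    q t lbar abar = q t lbar' abar'

/-- Positivity condition B1.2. -/
def B12 {Ω Lt : Type} [Fintype Ω] {K : ℕ} (P : Ω → ℝ)
    (L : Fin K → Ω → Lt) (A : Fin K → Ω → Fin 2)
    (q : Fin K → (Fin K → Lt) → (Fin K → Fin 2) → Fin 2 → ℝ) : Prop :=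
  ∀ (t : Fin K) (lbar : Fin K → Lt) (abar : Fin K → Fin 2),
    0 < pr P (histEvent L A t lbar abar) →
    ∀ a : Fin 2, 0 < q t lbar abar a →
      0 < cpr P (fun ω => A t ω = a) (histEvent L A t lbar abar)

/-- Counterfactual covariates and natural treatment values at time `t` depend on the
static regime `ā` only through `(ā_1, ..., ā_{t-1})`. -/
def CfPrefixDep {Ω Lt : Type} {K : ℕ}
    (Lc : (Fin K → Fin 2) → Fin K → Ω → Lt)
    (Ac : (Fin K → Fin 2) → Fin K → Ω → Fin 2) : Prop :=
  ∀ (abar abar' : Fin K → Fin 2) (t : Fin K),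
    (∀ s, s < t → abar s = abar' s) → Lc abar t = Lc abar' t ∧ Ac abar t = Ac abar' t

/-- Consistency of the counterfactual process with the observed data. -/
def CfConsistent {Ω Lt : Type} {K : ℕ}
    (L : Fin K → Ω → Lt) (A : Fin K → Ω → Fin 2) (Y : Ω → ℝ)
    (Lc : (Fin K → Fin 2) → Fin K → Ω → Lt)
    (Ac : (Fin K → Fin 2) → Fin K → Ω → Fin 2)
    (Yc : (Fin K → Fin 2) → Ω → ℝ) : Prop :=
  (∀ (abar : Fin K → Fin 2) (t : Fin K) (ω : Ω),
    (∀ s, s < t → A s ω = abar s) → Lc abar t ω = L t ω ∧ Ac abar t ω = A t ω) ∧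
  (∀ (abar : Fin K → Fin 2) (ω : Ω), (∀ s, A s ω = abar s) → Yc abar ω = Y ω)

/-- Counterfactual history event `{L̄_m(ā) = l̄_m, Ā_{m-1}(ā) = ā_{m-1}}`. -/
def cfHist {Ω Lt : Type} {K : ℕ}
    (Lc : (Fin K → Fin 2) → Fin K → Ω → Lt)
    (Ac : (Fin K → Fin 2) → Fin K → Ω → Fin 2)
    (abar : Fin K → Fin 2) (m : Fin K) (lbar : Fin K → Lt) : Ω → Prop :=
  fun ω => (∀ s, s ≤ m → Lc abar s ω = lbar s) ∧ (∀ s, s < m → Ac abar s ω = abar s)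

/-- Sequential exchangeability condition B1.4: for every `m` and `ā`, the vector
`(L_{m+1}(ā), ..., L_K(ā), Y(ā))` is conditionally independent of the indicator
`1{A_m(ā) = ā_m}` given each positive-probability counterfactual history. -/
def B14 {Ω Lt : Type} [Fintype Ω] {K : ℕ} (P : Ω → ℝ)
    (Lc : (Fin K → Fin 2) → Fin K → Ω → Lt)
    (Ac : (Fin K → Fin 2) → Fin K → Ω → Fin 2)
    (Yc : (Fin K → Fin 2) → Ω → ℝ) : Prop :=
  ∀ (m : Fin K) (abar : Fin K → Fin 2) (lbar : Fin K → Lt),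
    0 < pr P (cfHist Lc Ac abar m lbar) →
    ∀ (lv : Fin K → Lt) (y : ℝ),
      cpr P (fun ω => ((∀ s, m < s → Lc abar s ω = lv s) ∧ Yc abar ω = y)
            ∧ Ac abar m ω = abar m)
          (cfHist Lc Ac abar m lbar)
        = cpr P (fun ω => (∀ s, m < s → Lc abar s ω = lv s) ∧ Yc abar ω = y)
              (cfHist Lc Ac abar m lbar)
          * cpr P (fun ω => Ac abar m ω = abar m) (cfHist Lc Ac abar m lbar)

/-- Sequential exchangeability condition B1.3: as B1.4, but with the future vector
enlarged to `(L_{m+1}(ā), ..., L_K(ā), A_{m+1}(ā), ..., A_K(ā), Y(ā))`. -/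
def B13 {Ω Lt : Type} [Fintype Ω] {K : ℕ} (P : Ω → ℝ)
    (Lc : (Fin K → Fin 2) → Fin K → Ω → Lt)
    (Ac : (Fin K → Fin 2) → Fin K → Ω → Fin 2)
    (Yc : (Fin K → Fin 2) → Ω → ℝ) : Prop :=
  ∀ (m : Fin K) (abar : Fin K → Fin 2) (lbar : Fin K → Lt),
    0 < pr P (cfHist Lc Ac abar m lbar) →
    ∀ (lv : Fin K → Lt) (av : Fin K → Fin 2) (y : ℝ),
      cpr P (fun ω => ((∀ s, m < s → Lc abar s ω = lv s)
              ∧ (∀ s, m < s → Ac abar s ω = av s) ∧ Yc abar ω = y)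
            ∧ Ac abar m ω = abar m)
          (cfHist Lc Ac abar m lbar)
        = cpr P (fun ω => (∀ s, m < s → Lc abar s ω = lv s)
              ∧ (∀ s, m < s → Ac abar s ω = av s) ∧ Yc abar ω = y)
              (cfHist Lc Ac abar m lbar)
          * cpr P (fun ω => Ac abar m ω = abar m) (cfHist Lc Ac abar m lbar)

/-- Mean outcome under the stochastic regime with intervention kernels `q`:
`E[Y^q̃] = Σ_{ā} E[ Y(ā) · ∏_t q̃_t(ā_t | L̄_t(ā), ā_{t-1}) ]`. -/
def stochMean {Ω Lt : Type} [Fintype Ω] {K : ℕ} (P : Ω → ℝ)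
    (Lc : (Fin K → Fin 2) → Fin K → Ω → Lt)
    (Yc : (Fin K → Fin 2) → Ω → ℝ)
    (q : Fin K → (Fin K → Lt) → (Fin K → Fin 2) → Fin 2 → ℝ) : ℝ :=
  ∑ abar : Fin K → Fin 2,
    expec P (fun ω => Yc abar ω * ∏ t, q t (fun s => Lc abar s ω) abar (abar t))

/-- The decision functions of a modified treatment policy depend only on
`(a, l̄_t, ā_{t-1})`. -/
def PolPrefixDep {Lt : Type} {K : ℕ}
    (g : Fin K → Fin 2 → (Fin K → Lt) → (Fin K → Fin 2) → Fin 2) : Prop :=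
  ∀ (t : Fin K) (a : Fin 2) (lbar lbar' : Fin K → Lt) (abar abar' : Fin K → Fin 2),
    (∀ s, s ≤ t → lbar s = lbar' s) → (∀ s, s < t → abar s = abar' s) →
    g t a lbar abar = g t a lbar' abar'

/-- `Ap` is the recursively defined assigned-treatment process `Ā⁺` of the MTP `g`:
`A⁺_t = g_t(A_t(Ā⁺_{t-1}), L̄_t(Ā⁺_{t-1}), Ā⁺_{t-1})`. -/
def IsMTPProcess {Ω Lt : Type} {K : ℕ}
    (Lc : (Fin K → Fin 2) → Fin K → Ω → Lt)
    (Ac : (Fin K → Fin 2) → Fin K → Ω → Fin 2)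
    (g : Fin K → Fin 2 → (Fin K → Lt) → (Fin K → Fin 2) → Fin 2)
    (Ap : Fin K → Ω → Fin 2) : Prop :=
  ∀ (t : Fin K) (ω : Ω),
    Ap t ω = g t (Ac (fun s => Ap s ω) t ω)
        (fun s => Lc (fun s' => Ap s' ω) s ω) (fun s => Ap s ω)

/-- Induced intervention kernels `q̃^g` of an MTP:
`q̃^g_t(a⁺ | l̄_t, ā_{t-1}) = Σ_{a : g_t(a,l̄_t,ā_{t-1}) = a⁺} P(A_t = a | L̄_t = l̄_t, Ā_{t-1} = ā_{t-1})`. -/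
def qMTP {Ω Lt : Type} [Fintype Ω] {K : ℕ} (P : Ω → ℝ)
    (L : Fin K → Ω → Lt) (A : Fin K → Ω → Fin 2)
    (g : Fin K → Fin 2 → (Fin K → Lt) → (Fin K → Fin 2) → Fin 2) :
    Fin K → (Fin K → Lt) → (Fin K → Fin 2) → Fin 2 → ℝ :=
  fun t lbar abar aplus =>
    ∑ a : Fin 2, if g t a lbar abar = aplus then
      cpr P (fun ω => A t ω = a) (histEvent L A t lbar abar) else 0

/-- Counterfactual (g1-stochastic) kernels `q^{g,cf}` of an MTP:
`q^{g,cf}_t(a⁺ | l̄_t, ā⁺_{t-1}) = P( g_t(A_t(Ā⁺_{t-1}), l̄_t, ā⁺_{t-1}) = a⁺ |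
  L̄_t(Ā⁺_{t-1}) = l̄_t, Ā⁺_{t-1} = ā⁺_{t-1} )`. -/
def qMTPcf {Ω Lt : Type} [Fintype Ω] {K : ℕ} (P : Ω → ℝ)
    (Lc : (Fin K → Fin 2) → Fin K → Ω → Lt)
    (Ac : (Fin K → Fin 2) → Fin K → Ω → Fin 2)
    (g : Fin K → Fin 2 → (Fin K → Lt) → (Fin K → Fin 2) → Fin 2)
    (Ap : Fin K → Ω → Fin 2) :
    Fin K → (Fin K → Lt) → (Fin K → Fin 2) → Fin 2 → ℝ :=
  fun t lbar abar aplus =>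
    cpr P (fun ω => g t (Ac (fun s => Ap s ω) t ω) lbar abar = aplus)
      (fun ω => (∀ s, s ≤ t → Lc (fun s' => Ap s' ω) s ω = lbar s) ∧
        (∀ s, s < t → Ap s ω = abar s))

/-!
Number the times `0, …, K - 1`. Fix a covariate path `l̄` and a treatment path `ā`, and let `R_m` be
the conditional mean, given the observed past `L_s = l_s`, `A_s = a_s` for `s < m`, of `Y(ā)`
restricted to the event that from time `m` on the counterfactual covariates follow `l̄` and the
policy turns the natural treatment values into `ā`. Given that past, consistency makes the
time-`m` counterfactuals observed. Hence `R_m = p(l_m | past) · E[1{g_m(A_m) = a_m} Z | past, l_m]`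
with `Z` a function of the counterfactual future. Exchangeability makes `Z` uncorrelated with
`1{A_m = a_m}`, hence, as `A_m` is binary, with every event in `A_m`: the second factor is
`q̃_m(a_m) · E[Z | past, l_m]`, and by positivity `A_m = a_m` may be added to the conditioning,
which yields `q̃_m(a_m) · R_{m+1}`. Iterating from `m = 0` to `m = K` gives the `(l̄, ā)` term of
the g-formula. The sum of the `R_0` over all `(l̄, ā)` is the MTP mean, because each sample point
follows exactly one such pair.
-/

section FiniteProbability

variable {Ω : Type} [Fintype Ω] {P : Ω → ℝ} {X : Ω → ℝ} {S T : Ω → Prop}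

lemma pr_nonneg (hP : ∀ ω, 0 ≤ P ω) (S : Ω → Prop) : 0 ≤ pr P S :=
  Finset.sum_nonneg fun ω _ => by split_ifs; exacts [hP ω, le_rfl]

lemma cpr_nonneg (hP : ∀ ω, 0 ≤ P ω) (S T : Ω → Prop) : 0 ≤ cpr P S T :=
  div_nonneg (pr_nonneg hP _) (pr_nonneg hP _)

lemma cpr_of_pr_eq_zero (hT : pr P T = 0) (S : Ω → Prop) : cpr P S T = 0 := by
  rw [cpr, hT, div_zero]

lemma cexp_of_pr_eq_zero (hT : pr P T = 0) (X : Ω → ℝ) : cexp P X T = 0 := by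
  rw [cexp, hT, div_zero]

lemma pr_eq_expec_indicator (P : Ω → ℝ) (S : Ω → Prop) :
    pr P S = expec P ({ω | S ω}.indicator 1) := by
  simp [pr, expec, Set.indicator_apply]

lemma cexp_eq_expec_indicator_div (P X : Ω → ℝ) (T : Ω → Prop) :
    cexp P X T = expec P ({ω | T ω}.indicator X) / pr P T := by
  simp [cexp, expec, Set.indicator_apply]

lemma expec_indicator_of_pr_eq_zero (hP : ∀ ω, 0 ≤ P ω) (hS : pr P S = 0) (X : Ω → ℝ) :
    expec P ({ω | S ω}.indicator X) = 0 := by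
  refine Finset.sum_eq_zero fun ω _ => ?_
  have hω := (Finset.sum_eq_zero_iff_of_nonneg fun ω _ => by
    split_ifs; exacts [hP ω, le_rfl]).1 hS ω (Finset.mem_univ ω)
  by_cases h : S ω
  · rw [if_pos h] at hω
    rw [hω, mul_zero]
  · simp [h]

lemma cexp_congr {X' : Ω → ℝ} (h : ∀ ω, T ω → X ω = X' ω) : cexp P X T = cexp P X' T := by
  rw [cexp_eq_expec_indicator_div, cexp_eq_expec_indicator_div,
    Set.indicator_congr (s := {ω | T ω}) h]

lemma cexp_true (hP1 : ∑ ω, P ω = 1) (X : Ω → ℝ) : cexp P X (fun _ => True) = expec P X := by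
  simp [cexp, pr, expec, hP1]

lemma cexp_one (hT : pr P T ≠ 0) : cexp P 1 T = 1 := by
  rw [cexp_eq_expec_indicator_div, ← pr_eq_expec_indicator, div_self hT]

lemma cexp_indicator (P X : Ω → ℝ) (S T : Ω → Prop) :
    cexp P ({ω | S ω}.indicator X) T
      = expec P ({ω | S ω ∧ T ω}.indicator X) / pr P T := by
  rw [cexp_eq_expec_indicator_div, Set.indicator_indicator, Set.inter_comm]
  rfl

lemma cpr_eq_cexp_indicator (P : Ω → ℝ) (S T : Ω → Prop) :
    cpr P S T = cexp P ({ω | S ω}.indicator 1) T := by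
  rw [cexp_indicator, cpr, pr_eq_expec_indicator P fun ω => S ω ∧ T ω]

lemma cexp_indicator_eq_cpr_mul_cexp (hP : ∀ ω, 0 ≤ P ω) (X : Ω → ℝ) (S T : Ω → Prop) :
    cexp P ({ω | S ω}.indicator X) T = cpr P S T * cexp P X (fun ω => S ω ∧ T ω) := by
  rw [cexp_indicator, cpr, cexp_eq_expec_indicator_div]
  by_cases hST : pr P (fun ω => S ω ∧ T ω) = 0
  · rw [expec_indicator_of_pr_eq_zero hP hST, hST, zero_div, zero_div, zero_mul]
  · rw [mul_comm, div_mul_div_cancel₀ hST]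

lemma cexp_indicator_of_forall_eq {c : ℝ} (h : ∀ ω, S ω → X ω = c) :
    cexp P ({ω | S ω}.indicator X) T = c * cpr P S T := by
  have hX : {ω | S ω}.indicator X = fun ω => c * {ω | S ω}.indicator 1 ω := by
    funext ω
    by_cases hS : S ω <;> simp [hS, h]
  simp_rw [cpr_eq_cexp_indicator, hX, cexp, ← mul_div_assoc, Finset.mul_sum, mul_ite, mul_zero,
    mul_assoc]

lemma cexp_indicator_not (P X : Ω → ℝ) (S T : Ω → Prop) :
    cexp P ({ω | ¬ S ω}.indicator X) T = cexp P X T - cexp P ({ω | S ω}.indicator X) T := by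
  unfold cexp
  rw [← sub_div, ← Finset.sum_sub_distrib]
  congr! 2 with ω
  by_cases hS : S ω <;> simp [hS]

lemma cexp_eq_sum_fiber {β : Type*} (V : Ω → β) {s : Finset β} (hV : ∀ ω, V ω ∈ s) :
    cexp P X T = ∑ v ∈ s, cexp P ({ω | V ω = v}.indicator X) T := by
  simp_rw [cexp, ← Finset.sum_div]
  rw [Finset.sum_comm]
  congr! 2 with ω
  simp [Set.indicator_apply, hV]

lemma cexp_indicator_comp_eq_sum {β : Type*} (V : Ω → β) {s : Finset β} (hV : ∀ ω, V ω ∈ s)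
    (Q : β → Prop) [DecidablePred Q] :
    cexp P ({ω | Q (V ω)}.indicator X) T
      = ∑ v ∈ s, if Q v then cexp P ({ω | V ω = v}.indicator X) T else 0 := by
  rw [cexp_eq_sum_fiber V hV]
  refine Finset.sum_congr rfl fun v _ => ?_
  split_ifs with hQ
  · refine cexp_congr fun ω _ => ?_
    by_cases hv : V ω = v <;> simp [hv, hQ]
  · rw [cexp_indicator_of_forall_eq (c := 0) fun ω hv => by simp [hv, hQ], zero_mul]

lemma cpr_comp_eq_sum {β : Type*} (V : Ω → β) {s : Finset β} (hV : ∀ ω, V ω ∈ s)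
    (Q : β → Prop) [DecidablePred Q] :
    cpr P (fun ω => Q (V ω)) T = ∑ v ∈ s, if Q v then cpr P (fun ω => V ω = v) T else 0 := by
  simp_rw [cpr_eq_cexp_indicator]
  exact cexp_indicator_comp_eq_sum V hV Q

end FiniteProbability

/-- Given the event `T`, the random variable `X` is uncorrelated with the indicator of `S`:
`E[1_S X | T] = P(S | T) E[X | T]`. It holds trivially when `T` is null, both sides then
being `0` by convention. -/
def CondUncorrelated {Ω : Type} [Fintype Ω] (P X : Ω → ℝ) (S T : Ω → Prop) : Prop :=
  cexp P ({ω | S ω}.indicator X) T = cpr P S T * cexp P X T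

namespace CondUncorrelated

variable {Ω : Type} [Fintype Ω] {P : Ω → ℝ} {X : Ω → ℝ} {S T : Ω → Prop}

lemma of_pr_eq_zero (hT : pr P T = 0) : CondUncorrelated P X S T := by
  rw [CondUncorrelated, cexp_of_pr_eq_zero hT, cexp_of_pr_eq_zero hT, mul_zero]

lemma of_factorsThrough {β : Type*} {V : Ω → β} (hX : X.FactorsThrough V)
    (hV : ∀ ω₀, cpr P (fun ω => V ω = V ω₀ ∧ S ω) T
      = cpr P (fun ω => V ω = V ω₀) T * cpr P S T) :
    CondUncorrelated P X S T := by
  have hmem : ∀ ω, V ω ∈ Finset.univ.image V := fun ω =>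
    Finset.mem_image_of_mem V (Finset.mem_univ ω)
  rw [CondUncorrelated, cexp_eq_sum_fiber V hmem, cexp_eq_sum_fiber (X := X) V hmem,
    Finset.mul_sum]
  refine Finset.sum_congr rfl fun v hv => ?_
  obtain ⟨ω₀, -, rfl⟩ := Finset.mem_image.1 hv
  rw [Set.indicator_indicator, ← Set.ofPred_and,
    cexp_indicator_of_forall_eq fun ω hω => hX hω.1,
    cexp_indicator_of_forall_eq fun ω hω => hX hω, hV ω₀]
  ring

lemma congr_event {S' : Ω → Prop} (h : CondUncorrelated P X S T)
    (hS : ∀ ω, T ω → (S ω ↔ S' ω)) : CondUncorrelated P X S' T := by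
  have hcexp (Z : Ω → ℝ) :
      cexp P ({ω | S' ω}.indicator Z) T = cexp P ({ω | S ω}.indicator Z) T :=
    cexp_congr fun ω hω => by simp [Set.indicator_apply, hS ω hω]
  rw [CondUncorrelated, cpr_eq_cexp_indicator, hcexp, hcexp, ← cpr_eq_cexp_indicator, h]

protected lemma not (h : CondUncorrelated P X S T) :
    CondUncorrelated P X (fun ω => ¬ S ω) T := by
  by_cases hT : pr P T = 0
  · exact of_pr_eq_zero hT
  · have hnot : cpr P (fun ω => ¬ S ω) T = 1 - cpr P S T := by
      rw [cpr_eq_cexp_indicator, cexp_indicator_not, ← cpr_eq_cexp_indicator, cexp_one hT]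
    rw [CondUncorrelated, cexp_indicator_not, h, hnot]
    ring

lemma comp {β : Type*} {V : Ω → β}
    (h : ∀ v, CondUncorrelated P X (fun ω => V ω = v) T) (Q : β → Prop) :
    CondUncorrelated P X (fun ω => Q (V ω)) T := by
  have hmem : ∀ ω, V ω ∈ Finset.univ.image V := fun ω =>
    Finset.mem_image_of_mem V (Finset.mem_univ ω)
  rw [CondUncorrelated, cexp_indicator_comp_eq_sum V hmem, cpr_comp_eq_sum V hmem, Finset.sum_mul]
  refine Finset.sum_congr rfl fun v _ => ?_
  rw [h v, ite_mul, zero_mul]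

lemma comp_fin_two {V : Ω → Fin 2} {b : Fin 2}
    (h : CondUncorrelated P X (fun ω => V ω = b) T) (Q : Fin 2 → Prop) :
    CondUncorrelated P X (fun ω => Q (V ω)) T := by
  refine comp (fun v => ?_) Q
  by_cases hv : v = b
  · rwa [hv]
  · have hiff : ∀ ω, V ω = v ↔ ¬ V ω = b := by lia
    simp_rw [hiff]
    exact h.not

lemma cexp_and (hP : ∀ ω, 0 ≤ P ω) (h : CondUncorrelated P X S T) (hS : cpr P S T ≠ 0) :
    cexp P X (fun ω => S ω ∧ T ω) = cexp P X T := by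
  rw [CondUncorrelated, cexp_indicator_eq_cpr_mul_cexp hP] at h
  exact mul_left_cancel₀ hS h

end CondUncorrelated

lemma eq_prod_mul_of_forall_eq_mul_succ {M : Type*} [CommMonoid M] {n : ℕ} (f : ℕ → M)
    (c : Fin n → M) (h : ∀ i : Fin n, f i = c i * f (i + 1)) : f 0 = (∏ i, c i) * f n := by
  induction n with
  | zero => simp
  | succ n ih =>
    rw [Fin.prod_univ_castSucc, mul_assoc, ih (fun i => c i.castSucc) fun i => h i.castSucc]
    exact congrArg _ (h (Fin.last n))

section Histories

variable {Ω Lt : Type} {K : ℕ} {L : Fin K → Ω → Lt} {A : Fin K → Ω → Fin 2} {Y : Ω → ℝ}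
  {Lc : (Fin K → Fin 2) → Fin K → Ω → Lt} {Ac : (Fin K → Fin 2) → Fin K → Ω → Fin 2}
  {Yc : (Fin K → Fin 2) → Ω → ℝ}

/-- The event that the observed covariates and treatments follow `(l̄, ā)` at the first `m` time
points, i.e. those with index `< m`. For `m < K` this is the conditioning event of the covariate
factor `p(l_m | l̄_{m-1}, ā_{m-1})` in the g-formula. -/
def pastEvent (L : Fin K → Ω → Lt) (A : Fin K → Ω → Fin 2) (lbar : Fin K → Lt)
    (abar : Fin K → Fin 2) (m : ℕ) : Ω → Prop :=
  fun ω => (∀ s : Fin K, s < m → L s ω = lbar s) ∧ ∀ s : Fin K, s < m → A s ω = abar s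

lemma pastEvent_zero (lbar : Fin K → Lt) (abar : Fin K → Fin 2) :
    pastEvent L A lbar abar 0 = fun _ => True := by
  funext ω
  simp [pastEvent]

lemma pastEvent_last (lbar : Fin K → Lt) (abar : Fin K → Fin 2) :
    pastEvent L A lbar abar K = fun ω => (∀ s, L s ω = lbar s) ∧ ∀ s, A s ω = abar s := by
  funext ω
  simp [pastEvent]

lemma histEvent_eq_and_pastEvent (lbar : Fin K → Lt) (abar : Fin K → Fin 2) (m : Fin K) :
    histEvent L A m lbar abar = fun ω => L m ω = lbar m ∧ pastEvent L A lbar abar m ω := by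
  funext ω
  simp only [histEvent, pastEvent, Fin.val_fin_lt, le_iff_eq_or_lt, forall_eq_or_imp, and_assoc]

lemma pastEvent_succ (lbar : Fin K → Lt) (abar : Fin K → Fin 2) (m : Fin K) :
    pastEvent L A lbar abar (m + 1)
      = fun ω => A m ω = abar m ∧ histEvent L A m lbar abar ω := by
  have hlt : ∀ s : Fin K, (s : ℕ) < m + 1 ↔ s = m ∨ s < m := by lia
  funext ω
  simp only [histEvent, pastEvent, hlt, le_iff_eq_or_lt, forall_eq_or_imp]
  exact propext and_left_comm

lemma CfConsistent.forall_lt_treatment_iff (hcons : CfConsistent L A Y Lc Ac Yc)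
    (abar : Fin K → Fin 2) (m : Fin K) (ω : Ω) :
    (∀ s < m, Ac abar s ω = abar s) ↔ ∀ s < m, A s ω = abar s := by
  refine ⟨fun h s => ?_, fun h s hs => ?_⟩
  · induction s using WellFoundedLT.induction with
    | _ s ih =>
      intro hs
      rw [← (hcons.1 abar s ω fun r hr => ih r hr (hr.trans hs)).2, h s hs]
  · rw [(hcons.1 abar s ω fun r hr => h r (hr.trans hs)).2, h s hs]

lemma CfConsistent.cfHist_eq_histEvent (hcons : CfConsistent L A Y Lc Ac Yc)
    (abar : Fin K → Fin 2) (lbar : Fin K → Lt) (m : Fin K) :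
    cfHist Lc Ac abar m lbar = histEvent L A m lbar abar := by
  funext ω
  rw [cfHist, histEvent, hcons.forall_lt_treatment_iff]
  refine propext (and_congr_left fun hA => forall₂_congr fun s hs => ?_)
  rw [(hcons.1 abar s ω fun r hr => hA r (hr.trans_le hs)).1]

end Histories

section TailOutcome

variable {Ω Lt : Type} {K : ℕ} {L : Fin K → Ω → Lt} {A : Fin K → Ω → Fin 2} {Y : Ω → ℝ}
  {Lc : (Fin K → Fin 2) → Fin K → Ω → Lt} {Ac : (Fin K → Fin 2) → Fin K → Ω → Fin 2}
  {Yc : (Fin K → Fin 2) → Ω → ℝ}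
  {g : Fin K → Fin 2 → (Fin K → Lt) → (Fin K → Fin 2) → Fin 2}

/-- The event that at every time `s ≥ m` the counterfactual covariate `L_s(ā)` equals `l_s` and the
policy `g` maps the natural treatment value `A_s(ā)` to `a_s`. -/
def followsFrom (Lc : (Fin K → Fin 2) → Fin K → Ω → Lt) (Ac : (Fin K → Fin 2) → Fin K → Ω → Fin 2)
    (g : Fin K → Fin 2 → (Fin K → Lt) → (Fin K → Fin 2) → Fin 2)
    (lbar : Fin K → Lt) (abar : Fin K → Fin 2) (m : ℕ) : Set Ω :=
  {ω | ∀ s : Fin K, m ≤ s → Lc abar s ω = lbar s ∧ g s (Ac abar s ω) lbar abar = abar s}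

/-- The counterfactual outcome `Y(ā)` restricted to the event that `(l̄, ā)` is followed from time
`m` on; its conditional mean given the observed past is the quantity `R_m` of the recursion. -/
def tailOutcome (Lc : (Fin K → Fin 2) → Fin K → Ω → Lt) (Ac : (Fin K → Fin 2) → Fin K → Ω → Fin 2)
    (Yc : (Fin K → Fin 2) → Ω → ℝ)
    (g : Fin K → Fin 2 → (Fin K → Lt) → (Fin K → Fin 2) → Fin 2)
    (lbar : Fin K → Lt) (abar : Fin K → Fin 2) (m : ℕ) : Ω → ℝ :=
  (followsFrom Lc Ac g lbar abar m).indicator (Yc abar)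

/-- The vector `(L_{m+1}(ā), …, L_K(ā), A_{m+1}(ā), …, A_K(ā), Y(ā))` of condition B1.3. -/
def cfFuture (Lc : (Fin K → Fin 2) → Fin K → Ω → Lt) (Ac : (Fin K → Fin 2) → Fin K → Ω → Fin 2)
    (Yc : (Fin K → Fin 2) → Ω → ℝ) (abar : Fin K → Fin 2) (m : Fin K) (ω : Ω) :
    (Set.Ioi m → Lt) × (Set.Ioi m → Fin 2) × ℝ :=
  (fun s => Lc abar s ω, fun s => Ac abar s ω, Yc abar ω)

lemma cfFuture_eq_iff {abar : Fin K → Fin 2} {m : Fin K} {ω ω₀ : Ω} :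
    cfFuture Lc Ac Yc abar m ω = cfFuture Lc Ac Yc abar m ω₀ ↔
      (∀ s, m < s → Lc abar s ω = Lc abar s ω₀) ∧
        (∀ s, m < s → Ac abar s ω = Ac abar s ω₀) ∧ Yc abar ω = Yc abar ω₀ := by
  simp [cfFuture, funext_iff]

lemma tailOutcome_succ_factorsThrough (lbar : Fin K → Lt) (abar : Fin K → Fin 2) (m : Fin K) :
    (tailOutcome Lc Ac Yc g lbar abar (m + 1)).FactorsThrough (cfFuture Lc Ac Yc abar m) := by
  intro ω ω₀ h
  obtain ⟨hL, hA, hY⟩ := cfFuture_eq_iff.1 h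
  have hfollows :
      ω ∈ followsFrom Lc Ac g lbar abar (m + 1) ↔ ω₀ ∈ followsFrom Lc Ac g lbar abar (m + 1) :=
    forall₂_congr fun s hs => by rw [hL s hs, hA s hs]
  simp only [tailOutcome, Set.indicator_apply, hfollows, hY]

lemma followsFrom_eq_inter_succ (lbar : Fin K → Lt) (abar : Fin K → Fin 2) (m : Fin K) :
    followsFrom Lc Ac g lbar abar m
      = {ω | Lc abar m ω = lbar m} ∩ ({ω | g m (Ac abar m ω) lbar abar = abar m}
        ∩ followsFrom Lc Ac g lbar abar (m + 1)) := by
  have hle : ∀ s : Fin K, (m : ℕ) ≤ s ↔ s = m ∨ (m : ℕ) + 1 ≤ s := by lia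
  ext ω
  simp only [followsFrom, hle, forall_eq_or_imp, and_assoc, Set.mem_ofPred_eq, Set.mem_inter_iff]

lemma CfConsistent.tailOutcome_of_pastEvent (hcons : CfConsistent L A Y Lc Ac Yc)
    {lbar : Fin K → Lt} {abar : Fin K → Fin 2} {m : Fin K} {ω : Ω}
    (hpast : pastEvent L A lbar abar m ω) :
    tailOutcome Lc Ac Yc g lbar abar m ω
      = {ω | L m ω = lbar m}.indicator ({ω | g m (A m ω) lbar abar = abar m}.indicator
          (tailOutcome Lc Ac Yc g lbar abar (m + 1))) ω := by
  obtain ⟨hL, hA⟩ := hcons.1 abar m ω hpast.2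
  rw [tailOutcome, followsFrom_eq_inter_succ, ← Set.indicator_indicator, ← Set.indicator_indicator]
  simp only [Set.indicator_apply, Set.mem_ofPred_eq, hL, hA, tailOutcome]

lemma CfConsistent.tailOutcome_last_of_pastEvent (hcons : CfConsistent L A Y Lc Ac Yc)
    {lbar : Fin K → Lt} {abar : Fin K → Fin 2} {ω : Ω} (hpast : pastEvent L A lbar abar K ω) :
    tailOutcome Lc Ac Yc g lbar abar K ω = Y ω := by
  have hfollows : ω ∈ followsFrom Lc Ac g lbar abar K := fun s hs => absurd s.2 hs.not_gt
  rw [tailOutcome, Set.indicator_of_mem hfollows, hcons.2 abar ω fun s => hpast.2 s s.2]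

lemma IsMTPProcess.mem_followsFrom_zero_iff {Ap : Fin K → Ω → Fin 2}
    (hAp : IsMTPProcess Lc Ac g Ap) (hcfpre : CfPrefixDep Lc Ac) (hg : PolPrefixDep g)
    {lbar : Fin K → Lt} {abar : Fin K → Fin 2} {ω : Ω} :
    ω ∈ followsFrom Lc Ac g lbar abar 0 ↔
      abar = (fun s => Ap s ω) ∧ lbar = fun s => Lc abar s ω := by
  constructor
  · intro h
    obtain rfl : lbar = fun s => Lc abar s ω := funext fun s => (h s s.val.zero_le).1.symm
    refine ⟨funext fun s => ?_, rfl⟩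
    induction s using WellFoundedLT.induction with
    | _ s ih =>
      rw [hAp s ω, ← (h s s.val.zero_le).2, (hcfpre abar _ s ih).2]
      refine hg s _ _ _ _ _ (fun r hr => ?_) ih
      rw [(hcfpre abar _ r fun u hu => ih u (hu.trans_le hr)).1]
  · rintro ⟨rfl, rfl⟩ s -
    exact ⟨rfl, (hAp s ω).symm⟩

lemma IsMTPProcess.sum_tailOutcome_zero [Fintype Lt] {Ap : Fin K → Ω → Fin 2}
    (hAp : IsMTPProcess Lc Ac g Ap) (hcfpre : CfPrefixDep Lc Ac) (hg : PolPrefixDep g) (ω : Ω) :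
    ∑ lbar, ∑ abar, tailOutcome Lc Ac Yc g lbar abar 0 ω = Yc (fun s => Ap s ω) ω := by
  rw [Finset.sum_comm]
  simp [tailOutcome, Set.indicator_apply, hAp.mem_followsFrom_zero_iff hcfpre hg, ite_and]

end TailOutcome

section GFormula

variable {Ω Lt : Type} [Fintype Ω] {K : ℕ} {P : Ω → ℝ}
  {L : Fin K → Ω → Lt} {A : Fin K → Ω → Fin 2} {Y : Ω → ℝ}
  {Lc : (Fin K → Fin 2) → Fin K → Ω → Lt} {Ac : (Fin K → Fin 2) → Fin K → Ω → Fin 2}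
  {Yc : (Fin K → Fin 2) → Ω → ℝ}
  {g : Fin K → Fin 2 → (Fin K → Lt) → (Fin K → Fin 2) → Fin 2}

lemma IsMTPProcess.expec_outcome_eq_sum_expec_tailOutcome [Fintype Lt] {Ap : Fin K → Ω → Fin 2}
    (hAp : IsMTPProcess Lc Ac g Ap) (hcfpre : CfPrefixDep Lc Ac) (hg : PolPrefixDep g) :
    expec P (fun ω => Yc (fun s => Ap s ω) ω)
      = ∑ lbar, ∑ abar, expec P (tailOutcome Lc Ac Yc g lbar abar 0) := by
  simp_rw [expec, ← hAp.sum_tailOutcome_zero (Yc := Yc) hcfpre hg, Finset.sum_mul]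
  rw [Finset.sum_comm]
  exact Finset.sum_congr rfl fun lbar _ => Finset.sum_comm

lemma qMTP_eq_cpr (t : Fin K) (lbar : Fin K → Lt) (abar : Fin K → Fin 2) (a : Fin 2) :
    qMTP P L A g t lbar abar a
      = cpr P (fun ω => g t (A t ω) lbar abar = a) (histEvent L A t lbar abar) := by
  rw [cpr_comp_eq_sum (A t) (fun ω => Finset.mem_univ (A t ω)) fun b => g t b lbar abar = a,
    qMTP]

lemma B13.condUncorrelated_cfHist (hB13 : B13 P Lc Ac Yc) (hP : ∀ ω, 0 ≤ P ω)
    (lbar : Fin K → Lt) (abar : Fin K → Fin 2) (m : Fin K) :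
    CondUncorrelated P (tailOutcome Lc Ac Yc g lbar abar (m + 1)) (fun ω => Ac abar m ω = abar m)
      (cfHist Lc Ac abar m lbar) := by
  rcases (pr_nonneg hP (cfHist Lc Ac abar m lbar)).eq_or_lt with hnull | hpos
  · exact .of_pr_eq_zero hnull.symm
  · refine .of_factorsThrough (tailOutcome_succ_factorsThrough lbar abar m) fun ω₀ => ?_
    simp_rw [cfFuture_eq_iff]
    exact hB13 m abar lbar hpos _ _ _

lemma B13.condUncorrelated_histEvent (hB13 : B13 P Lc Ac Yc) (hP : ∀ ω, 0 ≤ P ω)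
    (hcons : CfConsistent L A Y Lc Ac Yc) (lbar : Fin K → Lt) (abar : Fin K → Fin 2) (m : Fin K) :
    CondUncorrelated P (tailOutcome Lc Ac Yc g lbar abar (m + 1)) (fun ω => A m ω = abar m)
      (histEvent L A m lbar abar) := by
  have huncorr := hB13.condUncorrelated_cfHist (g := g) hP lbar abar m
  rw [hcons.cfHist_eq_histEvent] at huncorr
  exact huncorr.congr_event fun ω hω => by rw [(hcons.1 abar m ω hω.2).2]

lemma B12.qMTP_mul_cexp_histEvent (hB12 : B12 P L A (qMTP P L A g)) (hP : ∀ ω, 0 ≤ P ω)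
    {X : Ω → ℝ} {lbar : Fin K → Lt} {abar : Fin K → Fin 2} {m : Fin K}
    (hX : CondUncorrelated P X (fun ω => A m ω = abar m) (histEvent L A m lbar abar)) :
    qMTP P L A g m lbar abar (abar m) * cexp P X (histEvent L A m lbar abar)
      = qMTP P L A g m lbar abar (abar m) * cexp P X (pastEvent L A lbar abar (m + 1)) := by
  have hq_nonneg : 0 ≤ qMTP P L A g m lbar abar (abar m) := by
    rw [qMTP_eq_cpr]
    exact cpr_nonneg hP _ _
  rcases hq_nonneg.eq_or_lt with hq | hq
  · rw [← hq, zero_mul, zero_mul]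
  · have hhist : 0 < pr P (histEvent L A m lbar abar) :=
      (pr_nonneg hP _).lt_of_ne' fun hnull =>
        hq.ne' (by rw [qMTP_eq_cpr, cpr_of_pr_eq_zero hnull])
    rw [pastEvent_succ, hX.cexp_and hP (hB12 m lbar abar hhist (abar m) hq).ne']

lemma cexp_tailOutcome_eq_mul_succ (hP : ∀ ω, 0 ≤ P ω) (hcons : CfConsistent L A Y Lc Ac Yc)
    (hB12 : B12 P L A (qMTP P L A g)) (hB13 : B13 P Lc Ac Yc)
    (lbar : Fin K → Lt) (abar : Fin K → Fin 2) (m : Fin K) :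
    cexp P (tailOutcome Lc Ac Yc g lbar abar m) (pastEvent L A lbar abar m)
      = cpr P (fun ω => L m ω = lbar m) (pastEvent L A lbar abar m)
        * qMTP P L A g m lbar abar (abar m)
        * cexp P (tailOutcome Lc Ac Yc g lbar abar (m + 1))
            (pastEvent L A lbar abar (m + 1)) := by
  have huncorr := hB13.condUncorrelated_histEvent (g := g) hP hcons lbar abar m
  have hpolicy := huncorr.comp_fin_two fun b => g m b lbar abar = abar m
  rw [cexp_congr fun ω hω => hcons.tailOutcome_of_pastEvent hω,
    cexp_indicator_eq_cpr_mul_cexp hP, ← histEvent_eq_and_pastEvent, hpolicy, ← qMTP_eq_cpr,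
    hB12.qMTP_mul_cexp_histEvent hP huncorr, mul_assoc]

lemma expec_tailOutcome_zero_eq_gform_term (hP : ∀ ω, 0 ≤ P ω) (hP1 : ∑ ω, P ω = 1)
    (hcons : CfConsistent L A Y Lc Ac Yc)
    (hB12 : B12 P L A (qMTP P L A g)) (hB13 : B13 P Lc Ac Yc)
    (lbar : Fin K → Lt) (abar : Fin K → Fin 2) :
    expec P (tailOutcome Lc Ac Yc g lbar abar 0)
      = cexp P Y (fun ω => (∀ s, L s ω = lbar s) ∧ ∀ s, A s ω = abar s)
        * (∏ j : Fin K, cpr P (fun ω => L j ω = lbar j) (pastEvent L A lbar abar j))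
        * ∏ t, qMTP P L A g t lbar abar (abar t) := by
  have hiter := eq_prod_mul_of_forall_eq_mul_succ
    (fun m => cexp P (tailOutcome Lc Ac Yc g lbar abar m) (pastEvent L A lbar abar m)) _
    (cexp_tailOutcome_eq_mul_succ hP hcons hB12 hB13 lbar abar)
  rw [pastEvent_zero, cexp_true hP1, cexp_congr fun ω hω => hcons.tailOutcome_last_of_pastEvent hω,
    pastEvent_last, Finset.prod_mul_distrib] at hiter
  rw [hiter]
  ring

end GFormula

/-- Identification of modified-treatment-policy (MTP) means under
model `M2` (sequential exchangeability B1.3): for any MTP `g` whose induced kernels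
`q̃^g` satisfy positivity B1.2, under consistency and B1.3 one has
`E[Y^g] = Ψ_{q̃^g}(P)`. -/
theorem mtp_identification_M2
    (K : ℕ) (hK : 1 ≤ K) (Ω Lt : Type) [Fintype Ω] [Fintype Lt]
    (P : Ω → ℝ) (hP0 : ∀ ω, 0 ≤ P ω) (hP1 : (∑ ω, P ω) = 1)
    (L : Fin K → Ω → Lt) (A : Fin K → Ω → Fin 2) (Y : Ω → ℝ)
    (Lc : (Fin K → Fin 2) → Fin K → Ω → Lt)
    (Ac : (Fin K → Fin 2) → Fin K → Ω → Fin 2)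
    (Yc : (Fin K → Fin 2) → Ω → ℝ)
    (hcfpre : CfPrefixDep Lc Ac)
    (hcons : CfConsistent L A Y Lc Ac Yc)
    (g : Fin K → Fin 2 → (Fin K → Lt) → (Fin K → Fin 2) → Fin 2)
    (hg : PolPrefixDep g)
    (Ap : Fin K → Ω → Fin 2) (hAp : IsMTPProcess Lc Ac g Ap)
    (hB12 : B12 P L A (qMTP P L A g))
    (hB13 : B13 P Lc Ac Yc) :
    expec P (fun ω => Yc (fun s => Ap s ω) ω) = gform P L A Y (qMTP P L A g) := by
  rw [hAp.expec_outcome_eq_sum_expec_tailOutcome hcfpre hg]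
  exact Finset.sum_congr rfl fun lbar _ => Finset.sum_congr rfl fun abar _ =>
    expec_tailOutcome_zero_eq_gform_term hP0 hP1 hcons hB12 hB13 lbar abar
end
end

section
/- Non-identification of MTP means under model M1: there exist K ≥ 2, a finite collection of observed and counterfactual variables satisfying the consistency conditions and condition B1.4, and a modified treatment policy g whose induced kernels q̃^g satisfy positivity B1.2, such that E[Y^g] ≠ Ψ_{q̃^g}(P). Consequently the MTP mean γ_MTP (and, since γ_MTP = γ_MTP-SI^{g1} under B1.4, likewise its g1-stochastic analogue) is not identified by the g-formula under model M1. -/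
open Classical

noncomputable section

/-!
Condition B1.4 makes the future covariates and the outcome exchangeable with the natural treatment
at time `m`, but says nothing about the future natural treatments. Take `K = 2`, a trivial
covariate and `Y(ā) = ā₂`: nothing that B1.4 constrains is random, so it holds for any joint law of
`A₁`, `A₂(0)` and `A₂(1)`. The policy that forces the first treatment to `1` and leaves the second
at its natural value has `E[Y^g] = P(A₂(1) = 1)`, whereas its g-formula is
`P(A₂(1) = 1 | A₁ = 1)`. These differ as soon as `A₂(1)` depends on `A₁`, and this is compatible
with an observed law under which `A₁` and `A₂` are independent fair coins.
-/

section FiniteProbability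

variable {Ω : Type} [Fintype Ω] {P : Ω → ℝ} {S T : Ω → Prop}

lemma pr_mono (hP : ∀ ω, 0 ≤ P ω) (hST : ∀ ω, S ω → T ω) : pr P S ≤ pr P T := by
  refine Finset.sum_le_sum fun ω _ => ?_
  by_cases hS : S ω
  · simp [hS, hST ω hS]
  · simpa [hS] using ite_nonneg (hP ω) le_rfl

lemma pr_const [DecidablePred S] (c : ℝ) :
    pr (fun _ => c) S = (Finset.univ.filter S).card * c := by
  simp [pr, ← Finset.sum_filter]

lemma cpr_eq_one_of_imp (hT : pr P T ≠ 0) (hTS : ∀ ω, T ω → S ω) : cpr P S T = 1 := by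
  have inter_eq : (fun ω => S ω ∧ T ω) = T := funext fun ω => propext (and_iff_right_of_imp (hTS ω))
  rw [cpr, inter_eq, div_self hT]

lemma sum_cpr_eq_one {α : Type*} [Fintype α] (X : Ω → α) (hT : pr P T ≠ 0) :
    ∑ x, cpr P (fun ω => X ω = x) T = 1 := by
  have total : ∑ x, pr P (fun ω => X ω = x ∧ T ω) = pr P T := by
    simp only [pr]
    rw [Finset.sum_comm]
    refine Finset.sum_congr rfl fun ω _ => ?_
    by_cases hω : T ω <;> simp [hω]
  simp only [cpr]
  rw [← Finset.sum_div, total, div_self hT]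

lemma cexp_eq_of_eqOn {X : Ω → ℝ} {c : ℝ} (hT : pr P T ≠ 0) (hX : ∀ ω, T ω → X ω = c) :
    cexp P X T = c := by
  have numerator : (∑ ω, if T ω then X ω * P ω else 0) = c * pr P T := by
    rw [pr, Finset.mul_sum]
    refine Finset.sum_congr rfl fun ω _ => ?_
    by_cases hω : T ω <;> simp [hω, hX]
  rw [cexp, numerator, mul_div_cancel_right₀ c hT]

lemma expec_val_eq_pr (P : Ω → ℝ) (X : Ω → Fin 2) :
    expec P (fun ω => ((X ω : ℕ) : ℝ)) = pr P (fun ω => X ω = 1) := by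
  refine Finset.sum_congr rfl fun ω _ => ?_
  have binary : X ω = 0 ∨ X ω = 1 := by lia
  rcases binary with h | h <;> simp [h]

end FiniteProbability

section Longitudinal

variable {Ω Lt : Type} [Fintype Ω] {K : ℕ} {P : Ω → ℝ}
  {L : Fin K → Ω → Lt} {A : Fin K → Ω → Fin 2}

lemma B14_of_deterministic (P : Ω → ℝ) (l : (Fin K → Fin 2) → Fin K → Lt)
    (Ac : (Fin K → Fin 2) → Fin K → Ω → Fin 2) (y : (Fin K → Fin 2) → ℝ) :
    B14 P (fun abar s _ => l abar s) Ac (fun abar _ => y abar) := by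
  intro m abar lbar hist_pos lv v
  by_cases future : (∀ s, m < s → l abar s = lv s) ∧ y abar = v
  · simp only [eq_true future, true_and]
    rw [cpr_eq_one_of_imp hist_pos.ne' fun _ _ => trivial, one_mul]
  · simp only [eq_false future, false_and]
    simp [cpr, pr]

lemma qMTP_of_const {g : Fin K → Fin 2 → (Fin K → Lt) → (Fin K → Fin 2) → Fin 2} {t : Fin K}
    {lbar : Fin K → Lt} {abar : Fin K → Fin 2} {c : Fin 2} (hg : ∀ a, g t a lbar abar = c)
    (hist : pr P (histEvent L A t lbar abar) ≠ 0) (a : Fin 2) :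
    qMTP P L A g t lbar abar a = if c = a then 1 else 0 := by
  simp only [qMTP, hg]
  split_ifs
  · exact sum_cpr_eq_one (A t) hist
  · simp

lemma qMTP_of_natural {g : Fin K → Fin 2 → (Fin K → Lt) → (Fin K → Fin 2) → Fin 2} {t : Fin K}
    {lbar : Fin K → Lt} {abar : Fin K → Fin 2} (hg : ∀ a, g t a lbar abar = a) (a : Fin 2) :
    qMTP P L A g t lbar abar a =
      cpr P (fun ω => A t ω = a) (histEvent L A t lbar abar) := by
  simp [qMTP, hg]

/-- Every static treatment sequence is observed with positive probability. For a trivial covariate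
this is the strongest form of positivity. -/
def TreatmentsPos (P : Ω → ℝ) (A : Fin K → Ω → Fin 2) : Prop :=
  ∀ abar : Fin K → Fin 2, 0 < pr P (fun ω => ∀ s, A s ω = abar s)

lemma TreatmentsPos.pr_pos (hA : TreatmentsPos P A) (hP : ∀ ω, 0 ≤ P ω) (abar : Fin K → Fin 2)
    {T : Ω → Prop} (hT : ∀ ω, (∀ s, A s ω = abar s) → T ω) : 0 < pr P T :=
  (hA abar).trans_le (pr_mono hP hT)

lemma TreatmentsPos.histEvent_pos [Subsingleton Lt] (hA : TreatmentsPos P A) (hP : ∀ ω, 0 ≤ P ω)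
    (t : Fin K) (lbar : Fin K → Lt) (abar : Fin K → Fin 2) :
    0 < pr P (histEvent L A t lbar abar) :=
  hA.pr_pos hP abar fun _ h => ⟨fun _ _ => Subsingleton.elim _ _, fun s _ => h s⟩

lemma B12_of_treatmentsPos [Subsingleton Lt] (hA : TreatmentsPos P A) (hP : ∀ ω, 0 ≤ P ω)
    (L : Fin K → Ω → Lt) (q : Fin K → (Fin K → Lt) → (Fin K → Fin 2) → Fin 2 → ℝ) :
    B12 P L A q := by
  intro t lbar abar hist_pos a _
  refine div_pos (hA.pr_pos hP (Function.update abar t a) fun ω h => ⟨?_, ?_, ?_⟩) hist_pos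
  · simpa using h t
  · exact fun _ _ => Subsingleton.elim _ _
  · exact fun s hs => by simpa [hs.ne] using h s

lemma TreatmentsPos.gform_eq [Unique Lt] [Fintype Lt] (hA : TreatmentsPos P A)
    (hP : ∀ ω, 0 ≤ P ω) (L : Fin K → Ω → Lt) (f : (Fin K → Fin 2) → ℝ)
    (q : Fin K → (Fin K → Lt) → (Fin K → Fin 2) → Fin 2 → ℝ) :
    gform P L A (fun ω => f fun s => A s ω) q =
      ∑ abar, f abar * ∏ t, q t default abar (abar t) := by
  rw [gform, Fintype.sum_unique]
  refine Finset.sum_congr rfl fun abar _ => ?_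
  have outcome : cexp P (fun ω => f fun s => A s ω)
      (fun ω => (∀ s, L s ω = (default : Fin K → Lt) s) ∧ ∀ s, A s ω = abar s) = f abar :=
    cexp_eq_of_eqOn (hA.pr_pos hP abar fun _ h => ⟨fun _ => Subsingleton.elim _ _, h⟩).ne'
      fun ω hω => congrArg f (funext hω.2)
  have covariate (j : Fin K) : cpr P (fun ω => L j ω = (default : Fin K → Lt) j)
      (fun ω => (∀ s, s < j → L s ω = (default : Fin K → Lt) s) ∧ ∀ s, s < j → A s ω = abar s)
        = 1 :=
    cpr_eq_one_of_imp
      (hA.pr_pos hP abar fun _ h => ⟨fun _ _ => Subsingleton.elim _ _, fun s _ => h s⟩).ne'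
      fun _ _ => Subsingleton.elim _ _
  rw [outcome, Finset.prod_congr rfl fun j _ => covariate j, Finset.prod_const_one, mul_one]

end Longitudinal

section TwoStage

variable {Ω Lt : Type}

/-- Natural treatment values `(A₁, A₂(ā₁))` in two stages, built from arbitrary variables
`A₁`, `A₂(0)` and `A₂(1)`. -/
def natTreatment (A₁ : Ω → Fin 2) (A₂ : Fin 2 → Ω → Fin 2) (abar : Fin 2 → Fin 2) :
    Fin 2 → Ω → Fin 2 :=
  ![A₁, A₂ (abar 0)]

/-- Observed treatments `(A₁, A₂(A₁))`, the only choice consistent with `natTreatment`. -/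
def obsTreatment (A₁ : Ω → Fin 2) (A₂ : Fin 2 → Ω → Fin 2) : Fin 2 → Ω → Fin 2 :=
  ![A₁, fun ω => A₂ (A₁ ω) ω]

/-- The policy that sets the first treatment to `1` and leaves the second at its natural value. -/
def treatFirst : Fin 2 → Fin 2 → (Fin 2 → Lt) → (Fin 2 → Fin 2) → Fin 2 :=
  fun t a _ _ => ![1, a] t

/-- The process `Ā⁺ = (1, A₂(1))` assigned by `treatFirst`. -/
def treatFirstProcess (A₂ : Fin 2 → Ω → Fin 2) : Fin 2 → Ω → Fin 2 :=
  ![fun _ => 1, A₂ 1]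

variable (A₁ : Ω → Fin 2) (A₂ : Fin 2 → Ω → Fin 2)

lemma cfPrefixDep_natTreatment (l : Fin 2 → Ω → Lt) :
    CfPrefixDep (fun _ => l) (natTreatment A₁ A₂) := by
  refine fun abar abar' t h => ⟨rfl, ?_⟩
  fin_cases t
  · rfl
  · simp [natTreatment, h 0 (by simp)]

lemma cfConsistent_natTreatment (l : Fin 2 → Ω → Lt) (f : (Fin 2 → Fin 2) → ℝ) :
    CfConsistent l (obsTreatment A₁ A₂) (fun ω => f fun s => obsTreatment A₁ A₂ s ω)
      (fun _ => l) (natTreatment A₁ A₂) (fun abar _ => f abar) := by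
  refine ⟨fun abar t ω h => ⟨rfl, ?_⟩, fun abar ω h => congrArg f (funext h).symm⟩
  fin_cases t
  · rfl
  · have first : A₁ ω = abar 0 := h 0 (by simp)
    simp [natTreatment, obsTreatment, first]

lemma polPrefixDep_treatFirst : PolPrefixDep (treatFirst (Lt := Lt)) :=
  fun _ _ _ _ _ _ _ _ => rfl

lemma isMTPProcess_treatFirst (Lc : (Fin 2 → Fin 2) → Fin 2 → Ω → Lt) :
    IsMTPProcess Lc (natTreatment A₁ A₂) treatFirst (treatFirstProcess A₂) := by
  intro t ω
  fin_cases t <;> rfl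

variable [Fintype Ω] {P : Ω → ℝ} {A₁ A₂}

lemma cpr_obsTreatment_histEvent [Subsingleton Lt] (P : Ω → ℝ) (L : Fin 2 → Ω → Lt)
    (lbar : Fin 2 → Lt) (abar : Fin 2 → Fin 2) (a : Fin 2) :
    cpr P (fun ω => obsTreatment A₁ A₂ 1 ω = a) (histEvent L (obsTreatment A₁ A₂) 1 lbar abar) =
      cpr P (fun ω => A₂ (abar 0) ω = a) (fun ω => A₁ ω = abar 0) := by
  have hist_eq : histEvent L (obsTreatment A₁ A₂) 1 lbar abar = fun ω => A₁ ω = abar 0 := by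
    funext ω
    simp [histEvent, obsTreatment, eq_iff_true_of_subsingleton]
  have inter_eq : (fun ω => obsTreatment A₁ A₂ 1 ω = a ∧ A₁ ω = abar 0) =
      fun ω => A₂ (abar 0) ω = a ∧ A₁ ω = abar 0 := by
    funext ω
    exact propext (and_congr_left fun h => by simp [obsTreatment, h])
  rw [hist_eq, cpr, cpr, inter_eq]

lemma gform_treatFirst [Unique Lt] [Fintype Lt] (hP : ∀ ω, 0 ≤ P ω)
    (hA : TreatmentsPos P (obsTreatment A₁ A₂)) (L : Fin 2 → Ω → Lt) :
    gform P L (obsTreatment A₁ A₂) (fun ω => ((obsTreatment A₁ A₂ 1 ω : ℕ) : ℝ))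
        (qMTP P L (obsTreatment A₁ A₂) treatFirst) =
      cpr P (fun ω => A₂ 1 ω = 1) (fun ω => A₁ ω = 1) := by
  have first (abar : Fin 2 → Fin 2) (a : Fin 2) :
      qMTP P L (obsTreatment A₁ A₂) treatFirst 0 default abar a = if 1 = a then 1 else 0 :=
    qMTP_of_const (fun _ => rfl) (hA.histEvent_pos hP _ _ _).ne' a
  have second (abar : Fin 2 → Fin 2) (a : Fin 2) :
      qMTP P L (obsTreatment A₁ A₂) treatFirst 1 default abar a =
        cpr P (fun ω => A₂ (abar 0) ω = a) (fun ω => A₁ ω = abar 0) :=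
    (qMTP_of_natural (fun _ => rfl) a).trans (cpr_obsTreatment_histEvent P L default abar a)
  rw [hA.gform_eq hP L fun abar => ((abar 1 : ℕ) : ℝ),
    Fintype.sum_eq_single (![1, 1] : Fin 2 → Fin 2), Fin.prod_univ_two, first, second]
  · simp
  · intro abar hne
    obtain h₀ | h₀ : abar 0 = 0 ∨ abar 0 = 1 := by lia
    · rw [Fin.prod_univ_two, first, h₀]
      simp
    obtain h₁ | h₁ : abar 1 = 0 ∨ abar 1 = 1 := by lia
    · simp [h₁]
    · exact absurd (funext (Fin.forall_fin_two.mpr ⟨h₀, h₁⟩)) hne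

end TwoStage

section Witness

/-- `A₁` in the counterexample: the first of two independent fair coins on the uniform four-point
space. -/
def witnessA₁ : Fin 4 → Fin 2 :=
  ![0, 0, 1, 1]

/-- `A₂(0)` and `A₂(1)` in the counterexample: `A₂(0)` is the second coin, and `A₂(1)` agrees with
it where `A₁ = 1` and is `1` elsewhere. The altered values of `A₂(1)` are never observed, so the
observed `A₂` is the second coin. -/
def witnessA₂ : Fin 2 → Fin 4 → Fin 2 :=
  ![![0, 1, 0, 1], ![1, 1, 0, 1]]

lemma treatmentsPos_witness :
    TreatmentsPos (fun _ => 1 / 4) (obsTreatment witnessA₁ witnessA₂) := by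
  have observed : ∀ abar : Fin 2 → Fin 2,
      (Finset.univ.filter fun ω =>
        ∀ s, obsTreatment witnessA₁ witnessA₂ s ω = abar s).card = 1 := by decide
  intro abar
  rw [pr_const, observed]
  norm_num

lemma pr_witnessA₂ : pr (fun _ => 1 / 4) (fun ω => witnessA₂ 1 ω = 1) = 3 / 4 := by
  have card_eq : (Finset.univ.filter fun ω => witnessA₂ 1 ω = 1).card = 3 := by decide
  rw [pr_const, card_eq]
  norm_num

lemma cpr_witnessA₂ :
    cpr (fun _ => 1 / 4) (fun ω => witnessA₂ 1 ω = 1) (fun ω => witnessA₁ ω = 1) = 1 / 2 := by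
  have card_inter :
      (Finset.univ.filter fun ω => witnessA₂ 1 ω = 1 ∧ witnessA₁ ω = 1).card = 1 := by decide
  have card_cond : (Finset.univ.filter fun ω => witnessA₁ ω = 1).card = 2 := by decide
  rw [cpr, pr_const, pr_const, card_inter, card_cond]
  norm_num

end Witness

/-- Non-identification of MTP means under model `M1`: there exist
`K ≥ 2`, a finite collection of observed and counterfactual variables satisfying the
consistency conditions and sequential exchangeability B1.4, and a modified treatment
policy `g` whose induced kernels `q̃^g` satisfy positivity B1.2, such that
`E[Y^g] ≠ Ψ_{q̃^g}(P)`. -/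
theorem mtp_not_identified_under_M1 :
    ∃ (K nL n : ℕ), 2 ≤ K ∧
      ∃ (P : Fin n → ℝ) (L : Fin K → Fin n → Fin nL)
        (A : Fin K → Fin n → Fin 2) (Y : Fin n → ℝ)
        (Lc : (Fin K → Fin 2) → Fin K → Fin n → Fin nL)
        (Ac : (Fin K → Fin 2) → Fin K → Fin n → Fin 2)
        (Yc : (Fin K → Fin 2) → Fin n → ℝ)
        (g : Fin K → Fin 2 → (Fin K → Fin nL) → (Fin K → Fin 2) → Fin 2)
        (Ap : Fin K → Fin n → Fin 2),
        (∀ ω, 0 ≤ P ω) ∧ (∑ ω, P ω) = 1 ∧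
        CfPrefixDep Lc Ac ∧ CfConsistent L A Y Lc Ac Yc ∧
        B14 P Lc Ac Yc ∧
        PolPrefixDep g ∧ IsMTPProcess Lc Ac g Ap ∧
        B12 P L A (qMTP P L A g) ∧
        expec P (fun ω => Yc (fun s => Ap s ω) ω) ≠ gform P L A Y (qMTP P L A g) := by
  have P_nonneg : ∀ _ : Fin 4, (0 : ℝ) ≤ 1 / 4 := fun _ => by norm_num
  refine ⟨2, 1, 4, le_rfl, fun _ => 1 / 4, fun _ _ => 0, obsTreatment witnessA₁ witnessA₂,
    fun ω => ((obsTreatment witnessA₁ witnessA₂ 1 ω : ℕ) : ℝ), fun _ _ _ => 0,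
    natTreatment witnessA₁ witnessA₂, fun abar _ => ((abar 1 : ℕ) : ℝ), treatFirst,
    treatFirstProcess witnessA₂, P_nonneg, by norm_num,
    cfPrefixDep_natTreatment _ _ _,
    cfConsistent_natTreatment _ _ _ fun abar => ((abar 1 : ℕ) : ℝ),
    B14_of_deterministic _ (fun _ _ => 0) _ fun abar => ((abar 1 : ℕ) : ℝ),
    polPrefixDep_treatFirst, isMTPProcess_treatFirst _ _ _,
    B12_of_treatmentsPos treatmentsPos_witness P_nonneg _ _, ?_⟩
  have mtp_mean : expec (fun _ => 1 / 4)
      (fun ω => ((treatFirstProcess witnessA₂ 1 ω : ℕ) : ℝ)) = 3 / 4 :=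
    (expec_val_eq_pr _ _).trans pr_witnessA₂
  rw [mtp_mean, gform_treatFirst P_nonneg treatmentsPos_witness, cpr_witnessA₂]
  norm_num
end
end
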